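/- Let n ≥ 1. The set 𝔖₊ of multi-sequences s = (s_α)_{α∈ℕ₀ⁿ} with s_0 = 1 that are moment sequences of Borel measures on ℝⁿ is closed in the topology of pointwise (coordinate-wise) convergence: if s⁽ᵏ⁾ ∈ 𝔖₊ and s_α⁽ᵏ⁾ → s_α for every α, then s ∈ 𝔖₊. -/

import Mathlib

open MeasureTheory Filter

/-- `s : (Fin n →₀ ℕ) → ℝ` is a moment (multi-)sequence if there is a Borel measure `μ` on
`ℝⁿ` with all moments finite such that `s_α = ∫ x^α dμ` for all `α`. -/
def IsMomentSeq {n : ℕ} (s : (Fin n →₀ ℕ) → ℝ) : Prop :=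
  ∃ μ : Measure (Fin n → ℝ),
    (∀ α : Fin n →₀ ℕ, Integrable (fun x : Fin n → ℝ => ∏ i, x i ^ α i) μ) ∧
    ∀ α : Fin n →₀ ℕ, s α = ∫ x, (∏ i, x i ^ α i) ∂μ

/-! The moment sequences whose even entries `s_{2α}` are bounded by given constants form a compact
set: they are the image, under `μ ↦ (∫ x^α dμ)_α`, of the finite measures with correspondingly
bounded even moments. These measures are tight because the total mass and `∫ ∑ x_j² dμ` are bounded,
and weakly closed because the integral of a nonnegative continuous function is weakly lower
semicontinuous. The moment map is continuous on them because a bound on `∫ x^{2α} dμ` makes `x^α`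
uniformly integrable. A convergent sequence of moment sequences is bounded in each coordinate, so it
stays in one of these compact sets, and so does its limit. -/

open scoped Topology NNReal ENNReal

section FiniteMeasure

variable {X : Type*} [TopologicalSpace X] [MeasurableSpace X]

theorem lowerSemicontinuous_lintegral_finiteMeasure [OpensMeasurableSpace X] {g : X → ℝ≥0}
    (hg : Continuous g) : LowerSemicontinuous fun μ : FiniteMeasure X => ∫⁻ x, g x ∂μ := by
  have hcont (m : ℕ) : Continuous fun μ : FiniteMeasure X => ∫⁻ x, (min (g x) m : ℝ≥0) ∂μ :=
    FiniteMeasure.continuous_lintegral_boundedContinuousFunction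
      ⟨⟨fun x => min (g x) m, by fun_prop⟩, m, fun x y => by
        have hmem (z : X) : ((min (g z) m : ℝ≥0) : ℝ) ∈ Set.Icc 0 (m : ℝ) :=
          ⟨NNReal.coe_nonneg _, by exact_mod_cast min_le_right _ _⟩
        simpa [NNReal.dist_eq, Real.dist_eq] using Real.dist_le_of_mem_Icc (hmem x) (hmem y)⟩
  have hsup (x : X) : (g x : ℝ≥0∞) = ⨆ m : ℕ, ((min (g x) m : ℝ≥0) : ℝ≥0∞) := by
    refine le_antisymm ?_ (iSup_le fun m => by exact_mod_cast min_le_left (g x) (m : ℝ≥0))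
    refine le_iSup_of_le ⌈g x⌉₊ ?_
    rw [min_eq_left (Nat.le_ceil _)]
  have hlint (μ : FiniteMeasure X) :
      ∫⁻ x, g x ∂μ = ⨆ m : ℕ, ∫⁻ x, (min (g x) m : ℝ≥0) ∂μ := by
    simp_rw [hsup]
    refine lintegral_iSup (fun m => ?_) fun m k hmk x => ?_
    · exact (hg.min continuous_const).measurable.coe_nnreal_ennreal
    · dsimp only
      gcongr
  simp_rw [hlint]
  exact lowerSemicontinuous_iSup fun m => (hcont m).lowerSemicontinuous

theorem isClosed_setOfPred_lintegral_le [OpensMeasurableSpace X] {g : X → ℝ≥0} (hg : Continuous g)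
    (D : ℝ≥0∞) : IsClosed {μ : FiniteMeasure X | ∫⁻ x, g x ∂μ ≤ D} :=
  (lowerSemicontinuous_lintegral_finiteMeasure hg).isClosed_preimage D

theorem isCompact_setOfPred_mass_le_lintegral_le [T2Space X] [BorelSpace X] {g : X → ℝ≥0}
    (hg : Continuous g) (hg_top : Tendsto g (cocompact X) atTop) (C D : ℝ≥0) :
    IsCompact {μ : FiniteMeasure X | μ.mass ≤ C ∧ ∫⁻ x, g x ∂μ ≤ D} := by
  let K (m : ℕ) : Set X := {x | g x ≤ m + 1}
  have hK (m : ℕ) : IsCompact (K m) := by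
    obtain ⟨L, hL, hLK⟩ := mem_cocompact.1 (hg_top.eventually_gt_atTop ((m : ℝ≥0) + 1))
    refine hL.of_isClosed_subset (isClosed_le hg continuous_const) fun x hx => ?_
    by_contra hxL
    exact (show (m : ℝ≥0) + 1 < g x from hLK hxL).not_ge hx
  have hK_mono : Monotone K := fun m k hmk x (hx : g x ≤ m + 1) => hx.trans (by gcongr)
  have hu : Tendsto (fun m : ℕ => D / ((m : ℝ≥0) + 1)) atTop (𝓝 0) := by
    have := (tendsto_one_div_add_atTop_nhds_zero_nat (𝕜 := ℝ≥0)).const_mul D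
    simpa [div_eq_mul_inv] using this
  refine (isCompact_setOfPred_finiteMeasure_mass_le_compl_isCompact_le C hu hK
    (.inr hK_mono)).of_isClosed_subset ?_ ?_
  · exact (isClosed_le FiniteMeasure.continuous_mass continuous_const).inter
      (isClosed_setOfPred_lintegral_le hg D)
  · rintro μ ⟨hμC, hμD⟩
    refine ⟨hμC, fun m => ?_⟩
    rw [← ENNReal.coe_le_coe, FiniteMeasure.ennreal_coeFn_eq_coeFn_toMeasure,
      ENNReal.coe_div (by positivity)]
    calc (μ : Measure X) (K m)ᶜ
        ≤ (μ : Measure X) {x | ((m + 1 : ℝ≥0) : ℝ≥0∞) ≤ g x} := by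
          refine measure_mono fun x (hx : ¬g x ≤ m + 1) => ?_
          exact ENNReal.coe_le_coe.2 (not_le.1 hx).le
      _ ≤ (∫⁻ x, g x ∂μ) / (m + 1 : ℝ≥0) :=
          meas_ge_le_lintegral_div hg.measurable.coe_nnreal_ennreal.aemeasurable
            (by norm_cast) ENNReal.coe_ne_top
      _ ≤ D / (m + 1 : ℝ≥0) := by gcongr

end FiniteMeasure

theorem enorm_sub_clamp_le_sq_div {M : ℝ≥0} (hM : 0 < M) (y : ℝ) :
    ‖y - max (-M : ℝ) (min y M)‖ₑ ≤ ‖y‖ₑ ^ 2 / M := by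
  have hreal : |y - max (-M : ℝ) (min y M)| ≤ y ^ 2 / M := by
    have hM' : (0 : ℝ) < M := hM
    rw [le_div_iff₀ hM']
    rcases le_total y M with h | h
    · rw [min_eq_left h]
      rcases le_total (-M : ℝ) y with h' | h'
      · rw [max_eq_right h']
        simpa using sq_nonneg y
      · rw [max_eq_left h', abs_of_nonpos (by linarith)]
        nlinarith
    · rw [min_eq_right h, max_eq_right (by linarith), abs_of_nonneg (by linarith)]
      nlinarith
  calc ‖y - max (-M : ℝ) (min y M)‖ₑ
      ≤ ENNReal.ofReal (y ^ 2 / M) := by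
        rw [Real.enorm_eq_ofReal_abs]
        exact ENNReal.ofReal_le_ofReal hreal
    _ = ‖y‖ₑ ^ 2 / M := by
        rw [ENNReal.ofReal_div_of_pos (by exact_mod_cast hM), ENNReal.ofReal_coe_nnreal,
          Real.enorm_eq_ofReal_abs, ← ENNReal.ofReal_pow (abs_nonneg y), sq_abs]

section SecondMoment

variable {X : Type*} [MeasurableSpace X]

theorem memLp_two_of_lintegral_enorm_sq_lt_top {E : Type*} [NormedAddCommGroup E] {μ : Measure X}
    {f : X → E} (hf : AEStronglyMeasurable f μ) (h : ∫⁻ x, ‖f x‖ₑ ^ 2 ∂μ < ∞) : MemLp f 2 μ := by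
  refine ⟨hf, ?_⟩
  rw [eLpNorm_lt_top_iff_lintegral_rpow_enorm_lt_top two_ne_zero ENNReal.ofNat_ne_top]
  simpa using h

theorem edist_integral_clamp_le {μ : Measure X} [IsFiniteMeasure μ] {f : X → ℝ}
    (hf : Integrable f μ) {M : ℝ≥0} (hM : 0 < M) :
    edist (∫ x, f x ∂μ) (∫ x, max (-M : ℝ) (min (f x) M) ∂μ) ≤ (∫⁻ x, ‖f x‖ₑ ^ 2 ∂μ) / M := by
  have hclamp : Integrable (fun x => max (-M : ℝ) (min (f x) M)) μ :=
    (integrable_const _).sup (hf.inf (integrable_const _))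
  rw [edist_eq_enorm_sub, ← integral_sub hf hclamp]
  calc ‖∫ x, (f x - max (-M : ℝ) (min (f x) M)) ∂μ‖ₑ
      ≤ ∫⁻ x, ‖f x - max (-M : ℝ) (min (f x) M)‖ₑ ∂μ := enorm_integral_le_lintegral_enorm _
    _ ≤ ∫⁻ x, ‖f x‖ₑ ^ 2 / M ∂μ := lintegral_mono fun x => enorm_sub_clamp_le_sq_div hM (f x)
    _ = (∫⁻ x, ‖f x‖ₑ ^ 2 ∂μ) / M := by
      simp_rw [div_eq_mul_inv]
      exact lintegral_mul_const' _ _ (by simpa using hM.ne')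

theorem continuousOn_integral_of_lintegral_enorm_sq_le [TopologicalSpace X]
    [OpensMeasurableSpace X] {f : X → ℝ} (hf : Continuous f) (C : ℝ≥0) :
    ContinuousOn (fun μ : FiniteMeasure X => ∫ x, f x ∂μ) {μ | ∫⁻ x, ‖f x‖ₑ ^ 2 ∂μ ≤ C} := by
  have hcont (m : ℕ) : Continuous fun μ : FiniteMeasure X =>
      ∫ x, max (-(m : ℝ≥0) : ℝ) (min (f x) (m : ℝ≥0)) ∂μ :=
    FiniteMeasure.continuous_integral_boundedContinuousFunction
      (BoundedContinuousFunction.ofNormedAddCommGroup _ (by fun_prop) m fun x =>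
        abs_le.2 ⟨le_max_left _ _, max_le (by simp) (min_le_right _ _)⟩)
  have hlim : Tendsto (fun m : ℕ => (C : ℝ≥0∞) / (m : ℝ≥0)) atTop (𝓝 0) := by
    simpa using ENNReal.Tendsto.const_div ENNReal.tendsto_nat_nhds_top
      (.inr (ENNReal.coe_ne_top (r := C)))
  have hunif : TendstoUniformlyOn
      (fun (m : ℕ) (μ : FiniteMeasure X) => ∫ x, max (-(m : ℝ≥0) : ℝ) (min (f x) (m : ℝ≥0)) ∂μ)
      (fun μ => ∫ x, f x ∂μ) atTop {μ | ∫⁻ x, ‖f x‖ₑ ^ 2 ∂μ ≤ C} := by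
    rw [EMetric.tendstoUniformlyOn_iff]
    intro ε hε
    filter_upwards [hlim.eventually_lt_const hε, eventually_gt_atTop 0] with m hmε hm μ hμ
    have hfi : Integrable f (μ : Measure X) :=
      (memLp_two_of_lintegral_enorm_sq_lt_top hf.aestronglyMeasurable
        (lt_of_le_of_lt hμ ENNReal.coe_lt_top)).integrable one_le_two
    exact (edist_integral_clamp_le hfi (by exact_mod_cast hm)).trans_lt
      ((ENNReal.div_le_div_right hμ _).trans_lt hmε)
  exact hunif.continuousOn (.of_forall fun m => (hcont m).continuousOn)

end SecondMoment

section Moments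

variable {ι : Type*} [Fintype ι]

/-- The moment map `μ ↦ (∫ x^α dμ)_α` on finite Borel measures on `ι → ℝ`. A moment that does
not exist takes the value `0`. -/
noncomputable def momentSeq (μ : FiniteMeasure (ι → ℝ)) (α : ι →₀ ℕ) : ℝ :=
  ∫ x : ι → ℝ, ∏ i, x i ^ α i ∂μ

/-- The finite Borel measures on `ι → ℝ` whose even moments `∫ x^{2α} dμ` are bounded by `B α`.
The moments are `[0, ∞]`-valued integrals of `|x^α|²`, so no integrability has to be assumed. -/
def evenMomentsLE (B : (ι →₀ ℕ) → ℝ≥0) : Set (FiniteMeasure (ι → ℝ)) :=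
  {μ | ∀ α : ι →₀ ℕ, ∫⁻ x : ι → ℝ, ‖∏ i, x i ^ α i‖ₑ ^ 2 ∂μ ≤ B α}

theorem continuous_prod_pow {R : Type*} [CommMonoid R] [TopologicalSpace R] [ContinuousMul R]
    (α : ι →₀ ℕ) : Continuous fun x : ι → R => ∏ i, x i ^ α i := by
  fun_prop

theorem prod_pow_two_smul {R : Type*} [CommMonoid R] (α : ι →₀ ℕ) (x : ι → R) :
    ∏ i, x i ^ (2 • α) i = (∏ i, x i ^ α i) ^ 2 := by
  simp [← Finset.prod_pow, ← pow_mul, mul_comm]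

theorem prod_pow_single_one {R : Type*} [CommMonoid R] (j : ι) (x : ι → R) :
    ∏ i, x i ^ (Finsupp.single j 1 : ι →₀ ℕ) i = x j := by
  rw [Finset.prod_eq_single j] <;> simp +contextual [eq_comm]

theorem tendsto_sum_nnnorm_sq_cocompact_atTop :
    Tendsto (fun x : ι → ℝ => ∑ j, ‖x j‖₊ ^ 2) (cocompact (ι → ℝ)) atTop := by
  have hnorm : Tendsto (fun x : ι → ℝ => ‖x‖₊ ^ 2) (cocompact (ι → ℝ)) atTop := by
    rw [← NNReal.tendsto_coe_atTop]
    simpa [Function.comp_def] using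
      (tendsto_pow_atTop two_ne_zero).comp (tendsto_norm_cocompact_atTop (E := ι → ℝ))
  refine tendsto_atTop_mono (fun x => ?_) hnorm
  rw [← NNReal.le_sqrt_iff_sq_le, pi_nnnorm_le_iff]
  intro j
  rw [NNReal.le_sqrt_iff_sq_le]
  exact Finset.single_le_sum (f := fun j => ‖x j‖₊ ^ 2) (fun _ _ => zero_le) (Finset.mem_univ j)

theorem isCompact_evenMomentsLE (B : (ι →₀ ℕ) → ℝ≥0) : IsCompact (evenMomentsLE B) := by
  refine (isCompact_setOfPred_mass_le_lintegral_le (by fun_prop)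
    tendsto_sum_nnnorm_sq_cocompact_atTop (B 0)
    (∑ j, B (Finsupp.single j 1))).of_isClosed_subset ?_ fun μ hμ => ⟨?_, ?_⟩
  · simp only [evenMomentsLE, Set.ofPred_forall]
    refine isClosed_iInter fun α => ?_
    simpa [enorm] using
      isClosed_setOfPred_lintegral_le ((continuous_prod_pow (R := ℝ) α).nnnorm.pow 2) (B α)
  · rw [← ENNReal.coe_le_coe, FiniteMeasure.ennreal_mass]
    simpa using hμ 0
  · simp only [ENNReal.ofNNReal_finsetSum]
    rw [lintegral_finsetSum _ (by fun_prop)]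
    gcongr with j
    simpa [prod_pow_single_one, enorm] using hμ (Finsupp.single j 1)

theorem continuousOn_momentSeq (B : (ι →₀ ℕ) → ℝ≥0) :
    ContinuousOn momentSeq (evenMomentsLE B) :=
  continuousOn_pi.2 fun α =>
    (continuousOn_integral_of_lintegral_enorm_sq_le (continuous_prod_pow α) (B α)).mono
      fun _ hμ => hμ α

theorem integrable_prod_pow_of_mem_evenMomentsLE {B : (ι →₀ ℕ) → ℝ≥0}
    {μ : FiniteMeasure (ι → ℝ)} (hμ : μ ∈ evenMomentsLE B) (α : ι →₀ ℕ) :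
    Integrable (fun x : ι → ℝ => ∏ i, x i ^ α i) (μ : Measure (ι → ℝ)) :=
  (memLp_two_of_lintegral_enorm_sq_lt_top (continuous_prod_pow α).aestronglyMeasurable
    ((hμ α).trans_lt ENNReal.coe_lt_top)).integrable one_le_two

theorem lintegral_enorm_prod_pow_sq {μ : Measure (ι → ℝ)} {α : ι →₀ ℕ}
    (hα : Integrable (fun x : ι → ℝ => ∏ i, x i ^ (2 • α) i) μ) :
    ∫⁻ x : ι → ℝ, ‖∏ i, x i ^ α i‖ₑ ^ 2 ∂μ =
      ENNReal.ofReal (∫ x : ι → ℝ, ∏ i, x i ^ (2 • α) i ∂μ) := by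
  simp only [prod_pow_two_smul] at hα ⊢
  rw [ofReal_integral_eq_lintegral_ofReal hα (.of_forall fun x => sq_nonneg _)]
  refine lintegral_congr fun x => ?_
  rw [Real.enorm_eq_ofReal_abs, ← ENNReal.ofReal_pow (abs_nonneg _), sq_abs]

variable {n : ℕ}

theorem image_momentSeq_evenMomentsLE (B : (Fin n →₀ ℕ) → ℝ≥0) :
    momentSeq '' evenMomentsLE B = {s | IsMomentSeq s ∧ ∀ α, s (2 • α) ≤ B α} := by
  ext s
  constructor
  · rintro ⟨μ, hμ, rfl⟩
    have hint := integrable_prod_pow_of_mem_evenMomentsLE hμ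
    refine ⟨⟨μ, hint, fun α => rfl⟩, fun α => ?_⟩
    have hα := hμ α
    rwa [lintegral_enorm_prod_pow_sq (hint (2 • α)), ENNReal.ofReal_le_coe] at hα
  · rintro ⟨⟨μ, hint, hμ⟩, hB⟩
    have : IsFiniteMeasure μ :=
      (integrable_const_iff_isFiniteMeasure one_ne_zero).1 (by simpa using hint 0)
    refine ⟨⟨μ, this⟩, fun α => ?_, funext fun α => (hμ α).symm⟩
    rw [FiniteMeasure.toMeasure_mk, lintegral_enorm_prod_pow_sq (hint (2 • α)), ← hμ,
      ENNReal.ofReal_le_coe]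
    exact hB α

theorem isCompact_setOfPred_isMomentSeq_le (B : (Fin n →₀ ℕ) → ℝ≥0) :
    IsCompact {s : (Fin n →₀ ℕ) → ℝ | IsMomentSeq s ∧ ∀ α, s (2 • α) ≤ B α} := by
  rw [← image_momentSeq_evenMomentsLE]
  exact (isCompact_evenMomentsLE B).image_of_continuousOn (continuousOn_momentSeq B)

end Moments

theorem stmt9_general (n : ℕ) : IsClosed {s : (Fin n →₀ ℕ) → ℝ | IsMomentSeq s} := by
  refine IsSeqClosed.isClosed fun s t hs hst => ?_
  choose B hB using fun α => (tendsto_pi_nhds.1 hst (2 • α)).bddAbove_range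
  have hmem (k : ℕ) : s k ∈ {s | IsMomentSeq s ∧ ∀ α, s (2 • α) ≤ (B α).toNNReal} :=
    ⟨hs k, fun α => (hB α ⟨k, rfl⟩).trans (Real.le_coe_toNNReal _)⟩
  exact ((isCompact_setOfPred_isMomentSeq_le _).isClosed.mem_of_tendsto hst (.of_forall hmem)).1

/-- The set `𝔖₊` of normalized moment sequences is closed under coordinate-wise
convergence: a pointwise limit of moment sequences with `s_0 = 1` is again such a
moment sequence. -/
theorem stmt9 (n : ℕ) (hn : 1 ≤ n)
    (s : ℕ → (Fin n →₀ ℕ) → ℝ) (t : (Fin n →₀ ℕ) → ℝ)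
    (hs : ∀ k, s k 0 = 1 ∧ IsMomentSeq (s k))
    (hconv : ∀ α, Tendsto (fun k => s k α) atTop (nhds (t α))) :
    t 0 = 1 ∧ IsMomentSeq t := by
  exact ⟨tendsto_nhds_unique (hconv 0) (by simp [(hs _).1]),
    (stmt9_general n).mem_of_tendsto (tendsto_pi_nhds.2 hconv) (.of_forall fun k => (hs k).2)⟩
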